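/- arXiv:2108.02848 — 6 statements merged into one kernel-verified Lean document; each statement's English description precedes it below -/
import Mathlib

section
/- Let Ω ⊆ ℝ^d, let (x_n)_{n∈ℕ} ⊂ Ω be dense in Ω, and let F be a finite-dimensional vector space of continuous functions Ω → ℝ spanned by φ_1,…,φ_K. Then there exists N₀ ∈ ℕ such that for every N ≥ N₀ the set X_N = {x_1,…,x_N} is F-unisolvent, i.e., the only f ∈ F with f(x_n) = 0 for all n = 1,…,N is the zero function. -/
/-!
The subspaces `G N = {f ∈ F | f (x n) = 0 for all n < N}` form a decreasing chain in the
finite-dimensional space `F`, so the chain is constant from some `N₀` on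
(`IsArtinian.monotone_stabilizes`). An element of `G N₀` therefore vanishes at every `x n`, and,
being continuous on `Ω`, it vanishes on all of `Ω` by density.
-/

/-- If `(x_n)` is dense in `Ω` and `F` is spanned by continuous
functions `φ_1, …, φ_K : Ω → ℝ`, then there is `N₀` such that for every `N ≥ N₀` the
set `X_N = {x_1, …, x_N}` is `F`-unisolvent: the only `f ∈ F` vanishing at
`x_1, …, x_N` is the zero function on `Ω`. -/
theorem stmt_1 (d K : ℕ) (Ω : Set (EuclideanSpace ℝ (Fin d)))
    (x : ℕ → EuclideanSpace ℝ (Fin d)) (hxΩ : ∀ n, x n ∈ Ω)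
    (hdense : ∀ y ∈ Ω, ∀ ε > 0, ∃ n, ‖y - x n‖ < ε)
    (φ : Fin K → EuclideanSpace ℝ (Fin d) → ℝ)
    (hcont : ∀ k, ContinuousOn (φ k) Ω) :
    ∃ N₀ : ℕ, ∀ N, N₀ ≤ N →
      ∀ f ∈ Submodule.span ℝ (Set.range φ),
        (∀ n < N, f (x n) = 0) → ∀ y ∈ Ω, f y = 0 := by
  have hF : ∀ f ∈ Submodule.span ℝ (Set.range φ), ContinuousOn f Ω := by
    intro f hf
    induction hf using Submodule.span_induction with
    | mem g hg => obtain ⟨k, rfl⟩ := hg; exact hcont k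
    | zero => exact continuousOn_const
    | add g h _ _ hg hh => exact hg.add hh
    | smul c g _ hg => exact hg.const_smul c
  have : FiniteDimensional ℝ (Submodule.span ℝ (Set.range φ)) :=
    FiniteDimensional.span_of_finite ℝ (Set.finite_range φ)
  let G : ℕ → Submodule ℝ (Submodule.span ℝ (Set.range φ)) := fun N =>
    { carrier := {f | ∀ n < N, f.1 (x n) = 0}
      zero_mem' := fun n _ => rfl
      add_mem' := fun {f g} hf hg n hn => by simp [hf n hn, hg n hn]
      smul_mem' := fun c f hf n hn => by simp [hf n hn] }
  have hG : ∀ M N, M ≤ N → G N ≤ G M := fun M N h f hf n hn => hf n (hn.trans_le h)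
  obtain ⟨N₀, hN₀⟩ := IsArtinian.monotone_stabilizes
    (⟨fun N => OrderDual.toDual (G N), fun M N h => hG M N h⟩ :
      ℕ →o (Submodule ℝ (Submodule.span ℝ (Set.range φ)))ᵒᵈ)
  refine ⟨N₀, fun N hN f hf hfx y hy => ?_⟩
  have hall : ∀ n, f (x n) = 0 := by
    intro n
    have h0 : (⟨f, hf⟩ : Submodule.span ℝ (Set.range φ)) ∈ G N₀ :=
      fun m hm => hfx m (hm.trans_le hN)
    have he : G N₀ = G (max N₀ (n + 1)) := hN₀ _ (le_max_left _ _)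
    rw [he] at h0
    exact h0 n (lt_of_lt_of_le n.lt_succ_self (le_max_right _ _))
  by_contra hne
  obtain ⟨δ, hδ, hδf⟩ := Metric.continuousOn_iff.1 (hF f hf) y hy |f y| (abs_pos.2 hne)
  obtain ⟨n, hn⟩ := hdense y hy δ hδ
  have h := hδf (x n) (hxΩ n) (by rwa [dist_comm, dist_eq_norm])
  simp [hall n, Real.dist_eq] at h
end

section
/- Let Ω ⊂ ℝ^d be a bounded set with boundary of Lebesgue measure zero and positive Lebesgue measure, contained in the hypercube C = [−R, R]^d. Let (y_n)_{n∈ℕ} be a sequence of distinct points that is equidistributed in C, i.e., lim_{M→∞} (|C|/M) Σ_{n=1}^M g(y_n) = ∫_C g(x) dx for every bounded measurable g : C → ℝ that is continuous Lebesgue-almost everywhere, and assume infinitely many y_n lie in Ω. Let (x_n)_{n∈ℕ} be the subsequence of (y_n) consisting of exactly those terms lying in Ω. Then (x_n)_{n∈ℕ} is equidistributed in Ω: lim_{N→∞} (|Ω|/N) Σ_{n=1}^N g(x_n) = ∫_Ω g(x) dx for every bounded measurable g : Ω → ℝ that is continuous Lebesgue-almost everywhere. -/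
/-!
The indicator of `Ω` is continuous off the null set `frontier Ω`, so the equidistribution of `y`
in the cube `C` may be tested against `g` extended by zero outside `Ω`
(`tendsto_average_indicator`). Only null-measurability of `Ω` is available, while the test
functions have to be Borel; hence one tests with the extension by zero from `interior Ω` instead,
and the error is controlled by the frequency of visits to the closed null set `frontier Ω`,
which tends to `0`.

Up to time `k N` exactly `N` terms of `y` lie in `Ω` (`sum_range_indicator`). Taking the extended
function `g` and the extended constant `1` along the times `k N` therefore gives
`|C| / k N * ∑_{n < N} g (x n) → ∫_Ω g` and `|C| / k N * N → |Ω|`, and the quotient of these two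
limits is the claim.
-/

open MeasureTheory

/-- A sequence `x` is equidistributed in a set `S ⊆ ℝ^d` if
`(|S|/N) ∑_{n<N} g(x_n) → ∫_S g` for every bounded measurable `g` that is continuous
(as a function on `S`) Lebesgue-almost everywhere on `S`. -/
def Equidistributed {d : ℕ} (S : Set (Fin d → ℝ)) (x : ℕ → Fin d → ℝ) : Prop :=
  ∀ g : (Fin d → ℝ) → ℝ, Measurable g →
    (∃ M : ℝ, ∀ y ∈ S, |g y| ≤ M) →
    (∀ᵐ y ∂(volume.restrict S), ContinuousWithinAt g S y) →
    Filter.Tendsto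
      (fun N : ℕ => (volume S).toReal / N * ∑ n ∈ Finset.range N, g (x n))
      Filter.atTop (nhds (∫ y in S, g y))

/-- The terms of `y` before time `k N` that lie in `Ω` are precisely the first `N` terms of the
subsequence `y ∘ k`. -/
lemma sum_range_indicator {X : Type*} {Ω : Set X} {y : ℕ → X} {k : ℕ → ℕ} (hk : StrictMono k)
    (hkΩ : ∀ n, y (k n) ∈ Ω) (hkall : ∀ m, y m ∈ Ω → ∃ n, k n = m) (g : X → ℝ) (N : ℕ) :
    ∑ m ∈ Finset.range (k N), Ω.indicator g (y m) = ∑ n ∈ Finset.range N, g (y (k n)) := by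
  classical
  have himage : (Finset.range N).image k ⊆ Finset.range (k N) := by
    intro m hm
    obtain ⟨n, hn, rfl⟩ := Finset.mem_image.1 hm
    exact Finset.mem_range.2 (hk (Finset.mem_range.1 hn))
  rw [← Finset.sum_subset himage, Finset.sum_image hk.injective.injOn]
  · exact Finset.sum_congr rfl fun n _ => Set.indicator_of_mem (hkΩ n) g
  · intro m hm hm'
    refine Set.indicator_of_notMem (fun hmΩ => hm' ?_) g
    obtain ⟨n, rfl⟩ := hkall m hmΩ
    exact Finset.mem_image_of_mem k
      (Finset.mem_range.2 (hk.lt_iff_lt.1 (Finset.mem_range.1 hm)))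

/-- A sequence equidistributed in `C` visits a closed null set with frequency zero. -/
lemma tendsto_frequency_zero {d : ℕ} {C F : Set (Fin d → ℝ)} {y : ℕ → Fin d → ℝ}
    (heq : Equidistributed C y) (hF : IsClosed F) (hF0 : volume F = 0) :
    Filter.Tendsto (fun N : ℕ => (volume C).toReal / N *
      ∑ n ∈ Finset.range N, F.indicator (fun _ => (1 : ℝ)) (y n)) Filter.atTop (nhds 0) := by
  have h := heq (F.indicator fun _ => (1 : ℝ)) (measurable_const.indicator hF.measurableSet)
    ⟨1, fun z _ => by by_cases hz : z ∈ F <;> simp [hz]⟩ ?_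
  · rwa [setIntegral_indicator hF.measurableSet,
      setIntegral_measure_zero _ (measure_mono_null Set.inter_subset_right hF0)] at h
  · refine ae_restrict_of_ae ?_
    filter_upwards [measure_eq_zero_iff_ae_notMem.1 hF0] with z hz
    refine ContinuousAt.continuousWithinAt ?_
    refine (continuousAt_const (y := (0 : ℝ))).congr ?_
    filter_upwards [hF.isOpen_compl.mem_nhds hz] with w hw
    exact (Set.indicator_of_notMem hw _).symm

/-- The averages along `y` of a test function `g` on `Ω`, extended by zero, converge to `∫_Ω g`. -/
lemma tendsto_average_indicator {d : ℕ} {C Ω : Set (Fin d → ℝ)} {y : ℕ → Fin d → ℝ}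
    (heq : Equidistributed C y) (hΩC : Ω ⊆ C) (hΩfr : volume (frontier Ω) = 0)
    {g : (Fin d → ℝ) → ℝ} (hg : Measurable g) (hbd : ∃ M : ℝ, ∀ z ∈ Ω, |g z| ≤ M)
    (hcont : ∀ᵐ z ∂(volume.restrict Ω), ContinuousWithinAt g Ω z) :
    Filter.Tendsto (fun N : ℕ => (volume C).toReal / N *
      ∑ n ∈ Finset.range N, Ω.indicator g (y n)) Filter.atTop (nhds (∫ z in Ω, g z)) := by
  obtain ⟨M, hM⟩ := hbd
  have hint := heq ((interior Ω).indicator g) (hg.indicator isOpen_interior.measurableSet)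
    ⟨|M|, fun z _ => ?_⟩ ?_
  · rw [setIntegral_indicator isOpen_interior.measurableSet,
      Set.inter_eq_right.2 (interior_subset.trans hΩC),
      setIntegral_congr_set (interior_ae_eq_of_null_frontier hΩfr)] at hint
    have hfr := (tendsto_frequency_zero heq isClosed_frontier hΩfr).const_mul |M|
    rw [mul_zero] at hfr
    have hdiff : Filter.Tendsto (fun N : ℕ => (volume C).toReal / N *
        ∑ n ∈ Finset.range N, (Ω.indicator g (y n) - (interior Ω).indicator g (y n)))
        Filter.atTop (nhds 0) := by
      refine squeeze_zero_norm (fun N => ?_) hfr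
      have hc : 0 ≤ (volume C).toReal / N := by positivity
      rw [norm_mul, Real.norm_of_nonneg hc, mul_left_comm, Finset.mul_sum]
      refine mul_le_mul_of_nonneg_left (norm_sum_le_of_le _ fun n _ => ?_) hc
      -- The two extensions by zero differ only on `Ω \ interior Ω ⊆ frontier Ω`.
      by_cases h1 : y n ∈ interior Ω
      · simp only [Set.indicator_of_mem h1, Set.indicator_of_mem (interior_subset h1),
          sub_self, norm_zero]
        exact mul_nonneg (abs_nonneg _) (Set.indicator_nonneg (fun _ _ => zero_le_one) _)
      · by_cases h2 : y n ∈ Ω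
        · have h3 : y n ∈ frontier Ω := ⟨subset_closure h2, h1⟩
          simpa [h1, h2, h3] using (hM _ h2).trans (le_abs_self M)
        · simp only [Set.indicator_of_notMem h1, Set.indicator_of_notMem h2,
            sub_self, norm_zero]
          exact mul_nonneg (abs_nonneg _) (Set.indicator_nonneg (fun _ _ => zero_le_one) _)
    have h := hint.add hdiff
    rw [add_zero] at h
    refine h.congr fun N => ?_
    rw [← mul_add, ← Finset.sum_add_distrib]
    simp only [add_sub_cancel]
  · by_cases hz : z ∈ interior Ω
    · simpa [hz] using (hM z (interior_subset hz)).trans (le_abs_self M)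
    · simp [hz]
  · have hcont' := ae_restrict_of_ae_restrict_of_subset interior_subset hcont
    rw [ae_restrict_iff' isOpen_interior.measurableSet] at hcont'
    refine ae_restrict_of_ae ?_
    filter_upwards [hcont', measure_eq_zero_iff_ae_notMem.1 hΩfr] with z hz hzfr
    refine ContinuousAt.continuousWithinAt ?_
    by_cases hzi : z ∈ interior Ω
    · refine ((hz hzi).continuousAt (mem_interior_iff_mem_nhds.1 hzi)).congr ?_
      filter_upwards [isOpen_interior.mem_nhds hzi] with w hw
      exact (Set.indicator_of_mem hw g).symm
    · have hzc : z ∉ closure Ω := fun h => hzfr ⟨h, hzi⟩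
      refine (continuousAt_const (y := (0 : ℝ))).congr ?_
      filter_upwards [isClosed_closure.isOpen_compl.mem_nhds hzc] with w hw
      exact (Set.indicator_of_notMem (fun h => hw (subset_closure (interior_subset h))) g).symm


/-- Let `Ω` be bounded with null boundary and positive volume,
contained in the hypercube `C = [-R,R]^d`. If `(y_n)` is a sequence of distinct points
equidistributed in `C` with infinitely many terms in `Ω`, then the subsequence of
`(y_n)` consisting of exactly those terms lying in `Ω` is equidistributed in `Ω`. -/
theorem stmt_2 (d : ℕ) (R : ℝ) (hR : 0 < R)
    (Ω : Set (Fin d → ℝ))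
    (hΩbdd : Bornology.IsBounded Ω)
    (hΩfr : volume (frontier Ω) = 0)
    (hΩpos : 0 < volume Ω)
    (hΩC : Ω ⊆ Set.Icc (fun _ => -R) (fun _ => R))
    (y : ℕ → Fin d → ℝ) (hy : Function.Injective y)
    (hyC : ∀ n, y n ∈ Set.Icc (fun _ => -R) (fun _ => R))
    (heq : Equidistributed (Set.Icc (fun _ => -R) (fun _ => R)) y)
    (hinf : {n | y n ∈ Ω}.Infinite)
    (k : ℕ → ℕ) (hk : StrictMono k)
    (hkΩ : ∀ n, y (k n) ∈ Ω)
    (hkall : ∀ m, y m ∈ Ω → ∃ n, k n = m) :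
    Equidistributed Ω (fun n => y (k n)) := by
  intro g hg hbd hcont
  set C : Set (Fin d → ℝ) := Set.Icc (fun _ => -R) (fun _ => R)
  have hCtop : volume C ≠ ⊤ := isCompact_Icc.measure_lt_top.ne
  have hC : (volume C).toReal ≠ 0 :=
    (ENNReal.toReal_pos (hΩpos.trans_le (measure_mono hΩC)).ne' hCtop).ne'
  have hΩ : (volume Ω).toReal ≠ 0 :=
    (ENNReal.toReal_pos hΩpos.ne' (measure_ne_top_of_subset hΩC hCtop)).ne'
  have hsum := (tendsto_average_indicator heq hΩC hΩfr hg hbd hcont).comp hk.tendsto_atTop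
  have hcount := (tendsto_average_indicator heq hΩC hΩfr (g := fun _ => 1) measurable_const
    ⟨1, fun _ _ => by simp⟩ (.of_forall fun _ => continuousWithinAt_const)).comp
    hk.tendsto_atTop
  simp only [Function.comp_def, sum_range_indicator hk hkΩ hkall] at hsum hcount
  have hone : (∫ _ in Ω, (1 : ℝ)) = (volume Ω).toReal := by simp [Measure.real]
  rw [hone] at hcount
  have h := (hsum.div hcount hΩ).const_mul (volume Ω).toReal
  rw [mul_div_cancel₀ _ hΩ] at h
  refine h.congr' ?_
  filter_upwards [Filter.eventually_gt_atTop 0] with N hN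
  have hN0 : (N : ℝ) ≠ 0 := by exact_mod_cast hN.ne'
  have hkN : (k N : ℝ) ≠ 0 := by exact_mod_cast (hN.trans_le (hk.id_le N)).ne'
  simp only [Pi.div_apply, Finset.sum_const, Finset.card_range, nsmul_eq_mul, mul_one]
  field_simp
end

section
/- Let Ω ⊂ ℝ^d be bounded, let F be a finite-dimensional vector space of bounded real-valued functions on Ω equipped with an inner product ⟨·,·⟩, and for each N let [u,v]_N = Σ_{n=1}^N r_n u(x_n) v(x_n) be a discrete bilinear form on F given by points x_1,…,x_N ∈ Ω and positive weights r_1,…,r_N (depending on N). Assume lim_{N→∞} [u,v]_N = ⟨u,v⟩ for all u, v ∈ F. Let (u_N)_{N∈ℕ}, (v_N)_{N∈ℕ} ⊂ F and u, v ∈ F with u, v bounded, such that u_N → u and v_N → v in the supremum norm ‖·‖_{L^∞(Ω)} on Ω. Then lim_{N→∞} [u_N, v_N]_N = ⟨u, v⟩. -/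
/-!
Each discrete form is bilinear, so in a basis `e` of `F` one has
`[u_N, v_N]_N = ∑ i, ∑ j, a_i(N) b_j(N) [e_i, e_j]_N`, a fixed finite sum, and it suffices that the
coordinates of `u_N` and `v_N` converge to those of `u` and `v`.

The sup norm on `Ω` separates the points of `F`: a function `f ∈ F` vanishing on `Ω` has
`[f, f]_N = 0` for all `N`, hence `ip f f = 0` and `f = 0`. So the evaluations at the points of `Ω`
have zero common kernel on `F` and, `F` being finite-dimensional, span its dual
(`tendsto_functional_of_tendsto_pointwise`). Each coordinate is thus a finite linear combination of
evaluations, and pointwise convergence on `Ω` is enough.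
-/

/-- If the evaluations at the points of `Ω` separate a finite-dimensional space `F` of functions,
they span the dual of `F`, so pointwise convergence on `Ω` passes to every linear functional. -/
theorem tendsto_functional_of_tendsto_pointwise {α : Type*} {Ω : Set α}
    (F : Submodule ℝ (α → ℝ)) [FiniteDimensional ℝ F]
    (hsep : ∀ f ∈ F, (∀ y ∈ Ω, f y = 0) → f = 0)
    (w : ℕ → F) (w₀ : F)
    (hw : ∀ y ∈ Ω, Filter.Tendsto (fun N => (w N : α → ℝ) y) Filter.atTop
      (nhds ((w₀ : α → ℝ) y)))
    (l : Module.Dual ℝ F) :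
    Filter.Tendsto (fun N => l (w N)) Filter.atTop (nhds (l w₀)) := by
  let ev : Ω → Module.Dual ℝ F := fun y => (LinearMap.proj (y : α)).comp F.subtype
  have hspan : Submodule.span ℝ (Set.range ev) = ⊤ := by
    have hco : (Submodule.span ℝ (Set.range ev)).dualCoannihilator = ⊥ := by
      rw [eq_bot_iff]
      intro f hf
      rw [Submodule.mem_dualCoannihilator] at hf
      exact Subtype.ext (hsep f f.2 fun y hy =>
        hf (ev ⟨y, hy⟩) (Submodule.subset_span ⟨⟨y, hy⟩, rfl⟩))
    rw [← Subspace.dualCoannihilator_dualAnnihilator_eq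
      (W := Submodule.span ℝ (Set.range ev)), hco, Submodule.dualAnnihilator_bot]
  have hl : l ∈ Submodule.span ℝ (Set.range ev) := hspan ▸ Submodule.mem_top
  induction hl using Submodule.span_induction with
  | mem x hx =>
    obtain ⟨y, rfl⟩ := hx
    exact hw y y.2
  | zero => simp
  | add x y _ _ hx hy => simpa using hx.add hy
  | smul a x _ hx => simpa using hx.const_mul a

/-- Expansion of a discrete form in a basis of `F`. -/
theorem discreteForm_eq_sum_basis {α ι κ : Type*} [Fintype ι] [Fintype κ]
    (F : Submodule ℝ (α → ℝ)) (e : Module.Basis ι ℝ F) (r : κ → ℝ) (x : κ → α) (f g : F) :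
    ∑ n, r n * (f : α → ℝ) (x n) * (g : α → ℝ) (x n) =
      ∑ i, ∑ j, e.repr f i * e.repr g j *
        ∑ n, r n * (e i : α → ℝ) (x n) * (e j : α → ℝ) (x n) := by
  have hexp : ∀ (h : F) (y : α), (h : α → ℝ) y = ∑ i, e.repr h i * (e i : α → ℝ) y := by
    intro h y
    conv_lhs => rw [← e.sum_repr h]
    simp [Finset.sum_apply, -Module.Basis.sum_repr]
  simp_rw [Finset.mul_sum]
  rw [Finset.sum_congr rfl fun i _ => Finset.sum_comm, Finset.sum_comm]
  refine Finset.sum_congr rfl fun n _ => ?_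
  rw [hexp f, hexp g, mul_assoc, Finset.sum_mul_sum, Finset.mul_sum]
  refine Finset.sum_congr rfl fun i _ => ?_
  rw [Finset.mul_sum]
  exact Finset.sum_congr rfl fun j _ => by ring


/-- **Lemma 1.** Let `Ω ⊂ ℝ^d` be bounded, `F` a finite-dimensional space
of bounded functions with an inner product `ip`, and `[u,v]_N = ∑_n r_n u(x_n) v(x_n)`
discrete bilinear forms with positive weights such that `[u,v]_N → ip u v` for all
`u, v ∈ F`. If `u_N → u` and `v_N → v` in the sup norm on `Ω` (with `u_N, v_N, u, v ∈ F`
and `u, v` bounded), then `[u_N, v_N]_N → ip u v`. -/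
theorem stmt_4 (d : ℕ) (Ω : Set (Fin d → ℝ)) (hΩ : Bornology.IsBounded Ω)
    (F : Submodule ℝ ((Fin d → ℝ) → ℝ)) (hfd : FiniteDimensional ℝ F)
    (hFbdd : ∀ f ∈ F, ∃ M : ℝ, ∀ y ∈ Ω, |f y| ≤ M)
    (ip : ((Fin d → ℝ) → ℝ) → ((Fin d → ℝ) → ℝ) → ℝ)
    (hipadd : ∀ u ∈ F, ∀ v ∈ F, ∀ g ∈ F, ip (u + v) g = ip u g + ip v g)
    (hipsmul : ∀ a : ℝ, ∀ u ∈ F, ∀ v ∈ F, ip (a • u) v = a * ip u v)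
    (hipsymm : ∀ u ∈ F, ∀ v ∈ F, ip u v = ip v u)
    (hippos : ∀ u ∈ F, u ≠ 0 → 0 < ip u u)
    (X : (N : ℕ) → Fin N → Fin d → ℝ) (hX : ∀ N n, X N n ∈ Ω)
    (r : (N : ℕ) → Fin N → ℝ) (hr : ∀ N n, 0 < r N n)
    (hconv : ∀ u ∈ F, ∀ v ∈ F,
      Filter.Tendsto (fun N : ℕ => ∑ n, r N n * u (X N n) * v (X N n))
        Filter.atTop (nhds (ip u v)))
    (uN vN : ℕ → (Fin d → ℝ) → ℝ) (huN : ∀ N, uN N ∈ F) (hvN : ∀ N, vN N ∈ F)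
    (u v : (Fin d → ℝ) → ℝ) (hu : u ∈ F) (hv : v ∈ F)
    (hub : ∃ M : ℝ, ∀ y ∈ Ω, |u y| ≤ M) (hvb : ∃ M : ℝ, ∀ y ∈ Ω, |v y| ≤ M)
    (huconv : ∀ ε > (0 : ℝ), ∃ N₁, ∀ N, N₁ ≤ N → ∀ y ∈ Ω, |uN N y - u y| ≤ ε)
    (hvconv : ∀ ε > (0 : ℝ), ∃ N₁, ∀ N, N₁ ≤ N → ∀ y ∈ Ω, |vN N y - v y| ≤ ε) :
    Filter.Tendsto (fun N : ℕ => ∑ n, r N n * uN N (X N n) * vN N (X N n))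
      Filter.atTop (nhds (ip u v)) := by
  have hsep : ∀ f ∈ F, (∀ y ∈ Ω, f y = 0) → f = 0 := by
    intro f hf h0
    by_contra hne
    have hlim := hconv f hf f hf
    simp only [h0 _ (hX _ _), mul_zero, Finset.sum_const_zero] at hlim
    exact (hippos f hf hne).ne (tendsto_nhds_unique tendsto_const_nhds hlim)
  have hpt : ∀ (wN : ℕ → (Fin d → ℝ) → ℝ) (w : (Fin d → ℝ) → ℝ),
      (∀ ε > (0 : ℝ), ∃ N₁, ∀ N, N₁ ≤ N → ∀ y ∈ Ω, |wN N y - w y| ≤ ε) →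
      ∀ y ∈ Ω, Filter.Tendsto (fun N => wN N y) Filter.atTop (nhds (w y)) := by
    intro wN w h y hy
    rw [Metric.tendsto_atTop]
    intro ε hε
    obtain ⟨N₁, hN₁⟩ := h (ε / 2) (half_pos hε)
    exact ⟨N₁, fun N hN => (hN₁ N hN y hy).trans_lt (half_lt_self hε)⟩
  let e := Module.finBasis ℝ F
  have hcu := fun i => tendsto_functional_of_tendsto_pointwise F hsep
    (fun N => ⟨uN N, huN N⟩) ⟨u, hu⟩ (hpt uN u huconv) (e.coord i)
  have hcv := fun i => tendsto_functional_of_tendsto_pointwise F hsep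
    (fun N => ⟨vN N, hvN N⟩) ⟨v, hv⟩ (hpt vN v hvconv) (e.coord i)
  simp only [Module.Basis.coord_apply] at hcu hcv
  have hee := fun i j => hconv (e i) (e i).2 (e j) (e j).2
  have hmain := tendsto_finsetSum Finset.univ fun i _ =>
    tendsto_finsetSum Finset.univ fun j _ => ((hcu i).mul (hcv j)).mul (hee i j)
  -- The same expansion for the constant sequences `u`, `v` identifies the limit as `ip u v`.
  have hfix := tendsto_finsetSum Finset.univ fun i _ =>
    tendsto_finsetSum Finset.univ fun j _ =>
      (hee i j).const_mul (e.repr ⟨u, hu⟩ i * e.repr ⟨v, hv⟩ j)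
  have hlim := tendsto_nhds_unique (hconv u hu v hv) (hfix.congr fun N =>
    (discreteForm_eq_sum_basis F e (r N) (X N) ⟨u, hu⟩ ⟨v, hv⟩).symm)
  rw [hlim]
  exact hmain.congr fun N =>
    (discreteForm_eq_sum_basis F e (r N) (X N) ⟨uN N, huN N⟩ ⟨vN N, hvN N⟩).symm
end

section
/- Let Ω ⊂ ℝ^d be bounded, let F be a K-dimensional vector space spanned by continuous bounded functions φ_1,…,φ_K : Ω → ℝ, let ⟨u,v⟩ = ∫_Ω u(x) v(x) ω(x) dx be an inner product on F, and for each N let [u,v]_N = Σ_{n=1}^N r_n u(x_n) v(x_n) be a discrete inner product on F (points x_n ∈ Ω, weights r_n > 0, positive definite on F). Assume lim_{N→∞} [u,v]_N = ⟨u,v⟩ for all u, v ∈ F. Let {π_k(·;ω)}_{k=1}^K and {π_k(·;r)}_{k=1}^K be the orthonormal bases of F obtained by applying the Gram–Schmidt procedure to the basis {φ_k}_{k=1}^K with respect to ⟨·,·⟩ and [·,·]_N respectively. Then for each k = 1,…,K, π_k(·;r) → π_k(·;ω) as N → ∞ in the supremum norm ‖·‖_{L^∞(Ω)}. -/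
open MeasureTheory

/-!
Everything happens in coordinates with respect to `φ`. Say that `g N` converges to `g₀` through
coefficients (`CoeffTendsto`) if `g N = ∑ j, c N j • φ j` eventually, `g₀ = ∑ j, c₀ j • φ j`, and
`c N → c₀`. This notion is stable under differences, finite sums and multiplication by convergent
scalars. It makes the discrete products converge: `ipN N (g N) (h N) → ipC g₀ h₀`, because `ipN N`
is bilinear and the Gram matrices converge (`CoeffTendsto.inner`). Bilinearity and integrability for
`ipC` are never needed, since `ipC` is determined on the span as a limit of the `ipN N`.

By strong induction on `k`, the Gram–Schmidt recursion then gives convergence through coefficients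
of the `k`-th basis function. The only discontinuous operation is the normalisation, where the limit
`ipC` of the unnormalised vector with itself has to be nonzero: it is `φ k` minus an element of the
span of the earlier `φ l`, hence not identically zero on `Ω` by linear independence. As the `φ j`
are bounded on `Ω`, convergence through coefficients implies uniform convergence on `Ω`.
-/

open Filter Topology

section

variable {α : Type*} {K : ℕ}

/-- `g N` converges to `g₀` through coefficients: eventually `g N` is a linear combination of the
`φ j`, with coefficients converging to those of a representation of `g₀`. -/
def CoeffTendsto (φ : Fin K → α → ℝ) (g : ℕ → α → ℝ) (g₀ : α → ℝ) : Prop :=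
  ∃ (c : ℕ → Fin K → ℝ) (c₀ : Fin K → ℝ), Tendsto c atTop (𝓝 c₀) ∧
    (∀ᶠ N in atTop, g N = Fintype.linearCombination ℝ φ (c N)) ∧
    g₀ = Fintype.linearCombination ℝ φ c₀

namespace CoeffTendsto

variable {φ : Fin K → α → ℝ} {g h : ℕ → α → ℝ} {g₀ h₀ : α → ℝ}

lemma basis (φ : Fin K → α → ℝ) (k : Fin K) : CoeffTendsto φ (fun _ => φ k) (φ k) :=
  ⟨fun _ => Pi.single k 1, Pi.single k 1, tendsto_const_nhds, by simp, by simp⟩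

lemma sub (hg : CoeffTendsto φ g g₀) (hh : CoeffTendsto φ h h₀) :
    CoeffTendsto φ (fun N => g N - h N) (g₀ - h₀) := by
  obtain ⟨c, c₀, hc, hgc, rfl⟩ := hg
  obtain ⟨e, e₀, he, hhe, rfl⟩ := hh
  refine ⟨fun N => c N - e N, c₀ - e₀, hc.sub he, ?_, by rw [map_sub]⟩
  filter_upwards [hgc, hhe] with N h1 h2
  rw [h1, h2, map_sub]

lemma smul {a : ℕ → ℝ} {a₀ : ℝ} (ha : Tendsto a atTop (𝓝 a₀)) (hg : CoeffTendsto φ g g₀) :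
    CoeffTendsto φ (fun N => a N • g N) (a₀ • g₀) := by
  obtain ⟨c, c₀, hc, hgc, rfl⟩ := hg
  refine ⟨fun N => a N • c N, a₀ • c₀, ha.smul hc, ?_, by rw [map_smul]⟩
  filter_upwards [hgc] with N h1
  rw [h1, map_smul]

lemma sum {ι : Type*} (s : Finset ι) {g : ι → ℕ → α → ℝ} {g₀ : ι → α → ℝ}
    (hg : ∀ i ∈ s, CoeffTendsto φ (g i) (g₀ i)) :
    CoeffTendsto φ (fun N => ∑ i ∈ s, g i N) (∑ i ∈ s, g₀ i) := by
  classical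
  induction s using Finset.induction_on with
  | empty => exact ⟨0, 0, tendsto_const_nhds, by simp, by simp⟩
  | insert i s hi ih =>
    obtain ⟨c, c₀, hc, hgc, h0⟩ := hg i (Finset.mem_insert_self i s)
    obtain ⟨e, e₀, he, hhe, h0'⟩ := ih fun j hj => hg j (Finset.mem_insert_of_mem hj)
    refine ⟨fun N => c N + e N, c₀ + e₀, hc.add he, ?_, ?_⟩
    · filter_upwards [hgc, hhe] with N h1 h2
      rw [Finset.sum_insert hi, h1, h2, map_add]
    · rw [Finset.sum_insert hi, h0, h0', map_add]

lemma congr (hg : CoeffTendsto φ g g₀) (hgh : ∀ᶠ N in atTop, h N = g N) (h0 : h₀ = g₀) :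
    CoeffTendsto φ h h₀ := by
  obtain ⟨c, c₀, hc, hgc, rfl⟩ := hg
  refine ⟨c, c₀, hc, ?_, h0⟩
  filter_upwards [hgc, hgh] with N h1 h2
  rw [h2, h1]

lemma mem_span (hg : CoeffTendsto φ g g₀) : g₀ ∈ Submodule.span ℝ (Set.range φ) := by
  obtain ⟨c, c₀, -, -, rfl⟩ := hg
  rw [← Fintype.range_linearCombination]
  exact ⟨c₀, rfl⟩

/-- Bilinear forms `B N` that converge pointwise on the span of `φ` converge jointly with their
arguments. The limit `b` is not assumed bilinear. -/
lemma inner {B : ℕ → (α → ℝ) →ₗ[ℝ] (α → ℝ) →ₗ[ℝ] ℝ} {b : (α → ℝ) → (α → ℝ) → ℝ}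
    (hB : ∀ u ∈ Submodule.span ℝ (Set.range φ), ∀ v ∈ Submodule.span ℝ (Set.range φ),
      Tendsto (fun N => B N u v) atTop (𝓝 (b u v)))
    (hg : CoeffTendsto φ g g₀) (hh : CoeffTendsto φ h h₀) :
    Tendsto (fun N => B N (g N) (h N)) atTop (𝓝 (b g₀ h₀)) := by
  have hlim := hB g₀ hg.mem_span h₀ hh.mem_span
  obtain ⟨c, c₀, hc, hgc, rfl⟩ := hg
  obtain ⟨e, e₀, he, hhe, rfl⟩ := hh
  have expand : ∀ N (x y : Fin K → ℝ),
      B N (Fintype.linearCombination ℝ φ x) (Fintype.linearCombination ℝ φ y) =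
        ∑ i, ∑ j, x i * (y j * B N (φ i) (φ j)) := by
    intro N x y
    simp only [Fintype.linearCombination_apply, map_sum, LinearMap.sum_apply, map_smul,
      LinearMap.smul_apply, smul_eq_mul, Finset.mul_sum]
    rw [Finset.sum_comm]
    refine Finset.sum_congr rfl fun i _ => Finset.sum_congr rfl fun j _ => by ring
  have key : ∀ (x y : ℕ → Fin K → ℝ), Tendsto x atTop (𝓝 c₀) → Tendsto y atTop (𝓝 e₀) →
      Tendsto (fun N => B N (Fintype.linearCombination ℝ φ (x N))
        (Fintype.linearCombination ℝ φ (y N))) atTop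
        (𝓝 (∑ i, ∑ j, c₀ i * (e₀ j * b (φ i) (φ j)))) := by
    intro x y hx hy
    simp only [expand]
    refine tendsto_finsetSum _ fun i _ => tendsto_finsetSum _ fun j _ => ?_
    exact ((tendsto_pi_nhds.1 hx) i).mul (((tendsto_pi_nhds.1 hy) j).mul
      (hB _ (Submodule.subset_span ⟨i, rfl⟩) _ (Submodule.subset_span ⟨j, rfl⟩)))
  -- Constant coefficients identify the value of `b` with the limiting double sum.
  rw [tendsto_nhds_unique hlim (key _ _ tendsto_const_nhds tendsto_const_nhds)]
  refine (key c e hc he).congr' ?_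
  filter_upwards [hgc, hhe] with N h1 h2
  rw [h1, h2]

lemma eventually_abs_sub_le {s : Set α} (hφ : ∀ k, ∃ M : ℝ, ∀ y ∈ s, |φ k y| ≤ M)
    (hg : CoeffTendsto φ g g₀) {ε : ℝ} (hε : 0 < ε) :
    ∀ᶠ N in atTop, ∀ y ∈ s, |g N y - g₀ y| ≤ ε := by
  obtain ⟨c, c₀, hc, hgc, rfl⟩ := hg
  choose M hM using hφ
  have hlim : Tendsto (fun N => ∑ j, |c N j - c₀ j| * M j) atTop (𝓝 0) := by
    have : Tendsto (fun N => ∑ j, |c N j - c₀ j| * M j) atTop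
        (𝓝 (∑ j, |c₀ j - c₀ j| * M j)) :=
      tendsto_finsetSum _ fun j _ =>
        (((tendsto_pi_nhds.1 hc) j).sub_const _).abs.mul_const _
    simpa using this
  filter_upwards [hgc, hlim.eventually (gt_mem_nhds hε)] with N h1 h2 y hy
  refine le_trans ?_ h2.le
  rw [h1, ← Pi.sub_apply, ← map_sub, Fintype.linearCombination_apply, Finset.sum_apply]
  refine (Finset.abs_sum_le_sum_abs _ _).trans (Finset.sum_le_sum fun j _ => ?_)
  simp only [Pi.smul_apply, Pi.sub_apply, smul_eq_mul, abs_mul]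
  exact mul_le_mul_of_nonneg_left (hM j y hy) (abs_nonneg _)

end CoeffTendsto

/-- Subtracting from `φ k` a combination of earlier functions leaves a function that is not
identically zero on `s`, when the restrictions of the `φ j` to `s` are linearly independent. -/
lemma exists_sub_ne_zero {s : Set α} {φ : Fin K → α → ℝ}
    (hli : LinearIndependent ℝ (fun k => s.domRestrict (φ k))) (k : Fin K) {f : α → ℝ}
    (hf : f ∈ Submodule.span ℝ (φ '' Set.Iio k)) : ∃ y ∈ s, (φ k - f) y ≠ 0 := by
  by_contra! hzero
  refine hli.notMem_span_image (s := Set.Iio k) (x := k) (by simp) ?_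
  let R : (α → ℝ) →ₗ[ℝ] (s → ℝ) := LinearMap.funLeft ℝ ℝ Subtype.val
  have hR : s.domRestrict (φ k) = R f := by
    ext y
    exact sub_eq_zero.1 (hzero y y.2)
  have := Submodule.mem_map_of_mem (f := R) hf
  rw [Submodule.map_span, ← Set.image_comp] at this
  rw [hR]
  exact this

end

/-- **Lemma 2.** Let `Ω ⊂ ℝ^d` be bounded, `F` spanned by continuous
bounded functions `φ_1, …, φ_K`, `⟨u,v⟩ = ∫_Ω u v ω` an inner product on `F`, and
`[u,v]_N = ∑_n r_n u(x_n) v(x_n)` discrete inner products on `F` with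
`[u,v]_N → ⟨u,v⟩` for all `u, v ∈ F`. If `{π_k(·;ω)}` and `{π_k(·;r)}` are the
orthonormal bases obtained by Gram–Schmidt from `{φ_k}` with respect to `⟨·,·⟩` and
`[·,·]_N`, then `π_k(·;r) → π_k(·;ω)` in the sup norm on `Ω` for each `k`. -/
theorem stmt_5 (d K : ℕ) (Ω : Set (Fin d → ℝ)) (hΩ : Bornology.IsBounded Ω)
    (φ : Fin K → (Fin d → ℝ) → ℝ)
    (hcont : ∀ k, ContinuousOn (φ k) Ω)
    (hbdd : ∀ k, ∃ M : ℝ, ∀ y ∈ Ω, |φ k y| ≤ M)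
    (hli : LinearIndependent ℝ (fun k => Ω.restrict (φ k)))
    (ω : (Fin d → ℝ) → ℝ) (hω : ∀ y ∈ Ω, 0 ≤ ω y)
    (ipC : ((Fin d → ℝ) → ℝ) → ((Fin d → ℝ) → ℝ) → ℝ)
    (hipC : ∀ u v, ipC u v = ∫ y in Ω, u y * v y * ω y)
    (hipCpos : ∀ f ∈ Submodule.span ℝ (Set.range φ),
      (∃ y ∈ Ω, f y ≠ 0) → 0 < ipC f f)
    (X : (N : ℕ) → Fin N → Fin d → ℝ) (hX : ∀ N n, X N n ∈ Ω)
    (r : (N : ℕ) → Fin N → ℝ) (hr : ∀ N n, 0 < r N n)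
    (ipN : ℕ → ((Fin d → ℝ) → ℝ) → ((Fin d → ℝ) → ℝ) → ℝ)
    (hipN : ∀ N u v, ipN N u v = ∑ n, r N n * u (X N n) * v (X N n))
    (N₁ : ℕ)
    (hposdef : ∀ N, N₁ ≤ N → ∀ f ∈ Submodule.span ℝ (Set.range φ),
      (∃ y ∈ Ω, f y ≠ 0) → 0 < ipN N f f)
    (hconv : ∀ u ∈ Submodule.span ℝ (Set.range φ),
      ∀ v ∈ Submodule.span ℝ (Set.range φ),
      Filter.Tendsto (fun N => ipN N u v) Filter.atTop (nhds (ipC u v)))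
    (πω : Fin K → (Fin d → ℝ) → ℝ)
    (hπω : ∀ k : Fin K,
      πω k = (Real.sqrt (ipC
          (φ k - ∑ l ∈ Finset.Iio k, ipC (φ k) (πω l) • πω l)
          (φ k - ∑ l ∈ Finset.Iio k, ipC (φ k) (πω l) • πω l)))⁻¹ •
        (φ k - ∑ l ∈ Finset.Iio k, ipC (φ k) (πω l) • πω l))
    (πr : ℕ → Fin K → (Fin d → ℝ) → ℝ)
    (hπr : ∀ N, N₁ ≤ N → ∀ k : Fin K,
      πr N k = (Real.sqrt (ipN N
          (φ k - ∑ l ∈ Finset.Iio k, ipN N (φ k) (πr N l) • πr N l)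
          (φ k - ∑ l ∈ Finset.Iio k, ipN N (φ k) (πr N l) • πr N l)))⁻¹ •
        (φ k - ∑ l ∈ Finset.Iio k, ipN N (φ k) (πr N l) • πr N l)) :
    ∀ k : Fin K, ∀ ε > (0 : ℝ), ∃ N₂, ∀ N, N₂ ≤ N →
      ∀ y ∈ Ω, |πr N k y - πω k y| ≤ ε := by
  -- The discrete products as bilinear forms.
  let B : ℕ → ((Fin d → ℝ) → ℝ) →ₗ[ℝ] ((Fin d → ℝ) → ℝ) →ₗ[ℝ] ℝ := fun N =>
    LinearMap.mk₂ ℝ (ipN N)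
      (fun u u' v => by
        simp only [hipN, ← Finset.sum_add_distrib, Pi.add_apply]
        exact Finset.sum_congr rfl fun _ _ => by ring)
      (fun a u v => by
        simp only [hipN, Finset.mul_sum, Pi.smul_apply, smul_eq_mul]
        exact Finset.sum_congr rfl fun _ _ => by ring)
      (fun u v v' => by
        simp only [hipN, ← Finset.sum_add_distrib, Pi.add_apply]
        exact Finset.sum_congr rfl fun _ _ => by ring)
      (fun a u v => by
        simp only [hipN, Finset.mul_sum, Pi.smul_apply, smul_eq_mul]
        exact Finset.sum_congr rfl fun _ _ => by ring)
  have hinner : ∀ {g h : ℕ → (Fin d → ℝ) → ℝ} {g₀ h₀ : (Fin d → ℝ) → ℝ},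
      CoeffTendsto φ g g₀ → CoeffTendsto φ h h₀ →
      Tendsto (fun N => ipN N (g N) (h N)) atTop (𝓝 (ipC g₀ h₀)) :=
    fun hg hh => CoeffTendsto.inner (B := B) (b := ipC) hconv hg hh
  have hspan : ∀ k : Fin K, πω k ∈ Submodule.span ℝ (φ '' Set.Iic k) := by
    intro k
    induction k using WellFoundedLT.induction with
    | ind k ih =>
      rw [hπω k]
      refine Submodule.smul_mem _ _ (Submodule.sub_mem _
        (Submodule.subset_span ⟨k, Set.self_mem_Iic, rfl⟩)
        (Submodule.sum_mem _ fun l hl => Submodule.smul_mem _ _ ?_))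
      have hlk : l < k := Finset.mem_Iio.1 hl
      exact Submodule.span_mono (Set.image_mono (Set.Iic_subset_Iic.2 hlk.le)) (ih l hlk)
  have main : ∀ k : Fin K, CoeffTendsto φ (fun N => πr N k) (πω k) := by
    intro k
    induction k using WellFoundedLT.induction with
    | ind k ih =>
      have htilde : CoeffTendsto φ
          (fun N => φ k - ∑ l ∈ Finset.Iio k, ipN N (φ k) (πr N l) • πr N l)
          (φ k - ∑ l ∈ Finset.Iio k, ipC (φ k) (πω l) • πω l) :=
        (CoeffTendsto.basis φ k).sub (CoeffTendsto.sum _ fun l hl =>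
          (ih l (Finset.mem_Iio.1 hl)).smul
            (hinner (CoeffTendsto.basis φ k) (ih l (Finset.mem_Iio.1 hl))))
      have hpos := hipCpos _ htilde.mem_span (exists_sub_ne_zero hli k
        (Submodule.sum_mem _ fun l hl => Submodule.smul_mem _ _
          (Submodule.span_mono
            (Set.image_mono (Set.Iic_subset_Iio.2 (Finset.mem_Iio.1 hl))) (hspan l))))
      have hscal := ((hinner htilde htilde).sqrt).inv₀ (Real.sqrt_pos.2 hpos).ne'
      refine (htilde.smul hscal).congr ?_ (hπω k)
      filter_upwards [eventually_ge_atTop N₁] with N hN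
      exact hπr N hN k
  intro k ε hε
  exact eventually_atTop.1 ((main k).eventually_abs_sub_le hbdd hε)
end

section
/- Let Ω ⊂ ℝ^d, let ω : Ω → [0,∞) be integrable and positive almost everywhere, and let F be a K-dimensional vector space spanned by continuous bounded functions φ_1,…,φ_K : Ω → ℝ with the constant function 1 belonging to F. Let (x_n)_{n∈ℕ} ⊂ Ω be a sequence such that there is N₁ with {x_1,…,x_N} F-unisolvent for all N ≥ N₁, and let (r_n)_{n∈ℕ} ⊂ (0,∞) be weights such that lim_{N→∞} Σ_{n=1}^N r_n u(x_n) v(x_n) = ∫_Ω ω(x) u(x) v(x) dx for all u, v ∈ F. For each N ≥ N₁ let w^{LS} ∈ ℝ^N be the unique minimizer of ‖R^{-1/2} w‖₂ over { w ∈ ℝ^N : Φ(X_N) w = m }, where R = diag(r_1,…,r_N). Then there exists N₀ ∈ ℕ such that for all N ≥ N₀ every entry of w^{LS} is positive; i.e., the least squares cubature formula C_N^{LS}[f] = Σ_{n=1}^N w_n^{LS} f(x_n) is positive. -/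
/-!
Let `G_N = Φ R Φᵀ` be the discrete Gram matrix of `φ` and `G` its limit, the Gram matrix of the
weighted `L²` form. The form of `G` vanishes at `f ∈ F` only if the sums `∑_{n<N} r_n f(x_n)²`, which
increase with `N`, tend to `0`; then `f` vanishes at every node, so `f = 0` on `Ω` by unisolvence.
Hence `G` is invertible (`gram_limit_det_ne_zero`), and so is `G_N` for large `N`.

The least squares weights are then `w_n = r_n p_N(x_n)` with `p_N = ∑ c_k φ_k`, `c = G_N⁻¹ m`
(`minimizer_eq`, by Pythagoras). If `1 = ∑ e_k φ_k`, then `m = G e`, so `c → G⁻¹ G e = e`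
by continuity of the matrix inverse. Since the `φ_k` are bounded, `p_N → 1` uniformly on `Ω`, so
`p_N > 0` at all nodes once `N` is large.
-/

open MeasureTheory

/-- The discrete Gram matrix `Φ R Φᵀ` of the functions `φ` on the first `N` nodes. -/
noncomputable def discreteGram {X : Type*} {K : ℕ} (φ : Fin K → X → ℝ) (x : ℕ → X) (r : ℕ → ℝ)
    (N : ℕ) : Matrix (Fin K) (Fin K) ℝ :=
  fun j k => ∑ n ∈ Finset.range N, r n * φ j (x n) * φ k (x n)

lemma discreteGram_mulVec {X : Type*} {K : ℕ} (φ : Fin K → X → ℝ) (x : ℕ → X) (r : ℕ → ℝ)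
    (N : ℕ) (c : Fin K → ℝ) (j : Fin K) :
    (discreteGram φ x r N).mulVec c j
      = ∑ n ∈ Finset.range N, r n * φ j (x n) * ∑ k, c k * φ k (x n) := by
  simp only [Matrix.mulVec, dotProduct, discreteGram, Finset.sum_mul, Finset.mul_sum]
  rw [Finset.sum_comm]
  refine Finset.sum_congr rfl fun n _ => Finset.sum_congr rfl fun k _ => by ring

lemma dotProduct_discreteGram_mulVec {X : Type*} {K : ℕ} (φ : Fin K → X → ℝ) (x : ℕ → X)
    (r : ℕ → ℝ) (N : ℕ) (c : Fin K → ℝ) :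
    dotProduct c ((discreteGram φ x r N).mulVec c)
      = ∑ n ∈ Finset.range N, r n * (∑ k, c k * φ k (x n)) ^ 2 := by
  simp only [dotProduct, discreteGram_mulVec, Finset.mul_sum (Finset.range N)]
  rw [Finset.sum_comm]
  refine Finset.sum_congr rfl fun n _ => ?_
  rw [sq, ← mul_assoc, Finset.mul_sum]
  exact Finset.sum_congr rfl fun k _ => by ring

/-- A limit of discrete Gram matrices is nonsingular if no nontrivial combination of the `φ k`
vanishes at all nodes: the quadratic forms increase with `N`, so a null vector of the limit is a null
vector of each of them. -/
lemma gram_limit_det_ne_zero {X : Type*} {K : ℕ} (φ : Fin K → X → ℝ) (x : ℕ → X) (r : ℕ → ℝ)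
    (hr : ∀ n, 0 < r n) (G : Matrix (Fin K) (Fin K) ℝ)
    (hG : Filter.Tendsto (discreteGram φ x r) Filter.atTop (nhds G))
    (hnodes : ∀ c : Fin K → ℝ, (∀ n, ∑ k, c k * φ k (x n) = 0) → c = 0) :
    G.det ≠ 0 := by
  intro hdet
  obtain ⟨v, hv, hGv⟩ := Matrix.exists_mulVec_eq_zero_iff.mpr hdet
  refine hv (hnodes v fun n => ?_)
  have hlim : Filter.Tendsto
      (fun N => ∑ n ∈ Finset.range N, r n * (∑ k, v k * φ k (x n)) ^ 2) Filter.atTop (nhds 0) := by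
    have hc : Continuous fun A : Matrix (Fin K) (Fin K) ℝ => dotProduct v (A.mulVec v) := by
      fun_prop
    have h := (hc.tendsto G).comp hG
    simpa [Function.comp_def, dotProduct_discreteGram_mulVec, hGv] using h
  have hnn : ∀ n, 0 ≤ r n * (∑ k, v k * φ k (x n)) ^ 2 := fun n =>
    mul_nonneg (hr n).le (sq_nonneg _)
  have hmono : Monotone
      (fun N => ∑ n ∈ Finset.range N, r n * (∑ k, v k * φ k (x n)) ^ 2) :=
    monotone_nat_of_le_succ fun N => by
      rw [Finset.sum_range_succ]
      exact le_add_of_nonneg_right (hnn N)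
  have h1 := hmono.ge_of_tendsto hlim (n + 1)
  have h2 := Finset.single_le_sum (fun i _ => hnn i) (Finset.self_mem_range_succ n)
  have h3 : r n * (∑ k, v k * φ k (x n)) ^ 2 = 0 := le_antisymm (h2.trans h1) (hnn n)
  simpa [(hr n).ne'] using h3

/-- Exact weights of the form `r n * p (x n)` with `p` in the span of the `φ k` are the only
minimizer of the weighted norm: any other exact `w` differs from them by a vector orthogonal to
`p`. -/
lemma minimizer_eq {X : Type*} {K : ℕ} (φ : Fin K → X → ℝ) (x : ℕ → X) (r : ℕ → ℝ)
    (hr : ∀ n, 0 < r n) (N : ℕ) (c m : Fin K → ℝ) (w : ℕ → ℝ)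
    (hc : (discreteGram φ x r N).mulVec c = m)
    (hw : ∀ k, ∑ n ∈ Finset.range N, w n * φ k (x n) = m k)
    (hmin : ∀ w' : ℕ → ℝ, (∀ k, ∑ n ∈ Finset.range N, w' n * φ k (x n) = m k) →
      Real.sqrt (∑ n ∈ Finset.range N, w n ^ 2 / r n) ≤
        Real.sqrt (∑ n ∈ Finset.range N, w' n ^ 2 / r n)) :
    ∀ n < N, w n = r n * ∑ k, c k * φ k (x n) := by
  set p : ℕ → ℝ := fun n => ∑ k, c k * φ k (x n) with hp
  have hex : ∀ k, ∑ n ∈ Finset.range N, (r n * p n) * φ k (x n) = m k := fun k => by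
    rw [← hc, discreteGram_mulVec]
    exact Finset.sum_congr rfl fun n _ => by simp only [hp]; ring
  have hle := hmin (fun n => r n * p n) hex
  rw [Real.sqrt_le_sqrt_iff (Finset.sum_nonneg fun n _ => div_nonneg (sq_nonneg _) (hr n).le)]
    at hle
  have horth : ∑ n ∈ Finset.range N, (w n - r n * p n) * p n = 0 := by
    have : ∀ n, (w n - r n * p n) * p n
        = ∑ k, c k * (w n * φ k (x n) - (r n * p n) * φ k (x n)) := fun n => by
      conv_lhs => rw [show p n = ∑ k, c k * φ k (x n) from rfl, Finset.mul_sum]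
      exact Finset.sum_congr rfl fun k _ => by ring
    simp only [this]
    rw [Finset.sum_comm]
    refine Finset.sum_eq_zero fun k _ => ?_
    rw [← Finset.mul_sum, Finset.sum_sub_distrib, hw, hex, sub_self, mul_zero]
  have hpyth : ∑ n ∈ Finset.range N, w n ^ 2 / r n
      = ∑ n ∈ Finset.range N, (r n * p n) ^ 2 / r n
        + 2 * ∑ n ∈ Finset.range N, (w n - r n * p n) * p n
        + ∑ n ∈ Finset.range N, (w n - r n * p n) ^ 2 / r n := by
    rw [Finset.mul_sum, ← Finset.sum_add_distrib, ← Finset.sum_add_distrib]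
    refine Finset.sum_congr rfl fun n _ => ?_
    have := (hr n).ne'
    field_simp
    ring
  have hnn : ∀ n ∈ Finset.range N, 0 ≤ (w n - r n * p n) ^ 2 / r n := fun n _ =>
    div_nonneg (sq_nonneg _) (hr n).le
  have hzero : ∑ n ∈ Finset.range N, (w n - r n * p n) ^ 2 / r n = 0 :=
    le_antisymm (by linarith) (Finset.sum_nonneg hnn)
  intro n hn
  have h := (Finset.sum_eq_zero_iff_of_nonneg hnn).mp hzero n (Finset.mem_range.mpr hn)
  have h' : w n - r n * p n = 0 := by simpa [(hr n).ne'] using h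
  linarith

/-- The solutions of linear systems whose matrices converge to a nonsingular one converge. -/
lemma tendsto_inv_mulVec {K : ℕ} (A : ℕ → Matrix (Fin K) (Fin K) ℝ)
    (G : Matrix (Fin K) (Fin K) ℝ) (hA : Filter.Tendsto A Filter.atTop (nhds G))
    (hdet : G.det ≠ 0) (m e : Fin K → ℝ) (hm : G.mulVec e = m) :
    Filter.Tendsto (fun N => (A N)⁻¹.mulVec m) Filter.atTop (nhds e) := by
  have hdetA : Filter.Tendsto (fun N => (A N).det) Filter.atTop (nhds G.det) :=
    ((Continuous.matrix_det continuous_id).tendsto G).comp hA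
  have hadj : Filter.Tendsto (fun N => (A N).adjugate.mulVec m) Filter.atTop
      (nhds (G.adjugate.mulVec m)) :=
    (((Continuous.matrix_adjugate continuous_id).matrix_mulVec continuous_const).tendsto G).comp hA
  have h := (hdetA.inv₀ hdet).smul hadj
  have he : (G.det)⁻¹ • G.adjugate.mulVec m = e := by
    rw [← hm, Matrix.mulVec_mulVec, Matrix.adjugate_mul, Matrix.smul_mulVec, Matrix.one_mulVec,
      smul_smul, inv_mul_cancel₀ hdet, one_smul]
  rw [he] at h
  refine h.congr fun N => ?_
  rw [Matrix.inv_def, Ring.inverse_eq_inv', Matrix.smul_mulVec]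

/-- **conditional positivity of least squares cubature.** Under the
assumptions: `ω ≥ 0` integrable and positive a.e. on `Ω`, `F` spanned by continuous
bounded functions `φ_1, …, φ_K` with `1 ∈ F`, nodes `(x_n) ⊂ Ω` eventually
`F`-unisolvent, and positive weights `r_n` with
`∑_{n<N} r_n u(x_n) v(x_n) → ∫_Ω ω u v` for all `u, v ∈ F`, the least squares weights
`w^{LS}` (the minimizer of `‖R^{-1/2} w‖₂ = √(∑ w_n²/r_n)` subject to the exactness
conditions) are all positive for every sufficiently large `N`. -/
theorem stmt_6 (d K : ℕ) (hK : 0 < K)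
    (Ω : Set (Fin d → ℝ))
    (ω : (Fin d → ℝ) → ℝ) (hω0 : ∀ y ∈ Ω, 0 ≤ ω y)
    (hωint : IntegrableOn ω Ω)
    (hωpos : ∀ᵐ y ∂(volume.restrict Ω), 0 < ω y)
    (φ : Fin K → (Fin d → ℝ) → ℝ)
    (hφc : ∀ k, ContinuousOn (φ k) Ω)
    (hφb : ∀ k, ∃ M : ℝ, ∀ y ∈ Ω, |φ k y| ≤ M)
    (hli : LinearIndependent ℝ (fun k => Ω.restrict (φ k)))
    (h1F : (fun _ => (1 : ℝ)) ∈ Submodule.span ℝ (Set.range φ))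
    (hmom : ∀ k, IntegrableOn (fun y => φ k y * ω y) Ω)
    (x : ℕ → Fin d → ℝ) (hx : ∀ n, x n ∈ Ω)
    (N₁ : ℕ)
    (huni : ∀ N, N₁ ≤ N → ∀ f ∈ Submodule.span ℝ (Set.range φ),
      (∀ n < N, f (x n) = 0) → ∀ y ∈ Ω, f y = 0)
    (r : ℕ → ℝ) (hr : ∀ n, 0 < r n)
    (hconv : ∀ u ∈ Submodule.span ℝ (Set.range φ),
      ∀ v ∈ Submodule.span ℝ (Set.range φ),
      Filter.Tendsto (fun N : ℕ => ∑ n ∈ Finset.range N, r n * u (x n) * v (x n))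
        Filter.atTop (nhds (∫ y in Ω, ω y * u y * v y)))
    (wLS : ℕ → ℕ → ℝ)
    (hwLS : ∀ N, N₁ ≤ N →
      (∀ k, ∑ n ∈ Finset.range N, wLS N n * φ k (x n) = ∫ y in Ω, φ k y * ω y) ∧
      ∀ w : ℕ → ℝ,
        (∀ k, ∑ n ∈ Finset.range N, w n * φ k (x n) = ∫ y in Ω, φ k y * ω y) →
        Real.sqrt (∑ n ∈ Finset.range N, wLS N n ^ 2 / r n) ≤
          Real.sqrt (∑ n ∈ Finset.range N, w n ^ 2 / r n)) :
    ∃ N₀, ∀ N, N₀ ≤ N → ∀ n < N, 0 < wLS N n := by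
  classical
  have hφF : ∀ k, φ k ∈ Submodule.span ℝ (Set.range φ) := fun k =>
    Submodule.subset_span ⟨k, rfl⟩
  obtain ⟨e, he⟩ := (Submodule.mem_span_range_iff_exists_fun ℝ).mp h1F
  have he1 : ∀ y, ∑ k, e k * φ k y = 1 := fun y => by
    simpa [Finset.sum_apply] using congrFun he y
  set G : Matrix (Fin K) (Fin K) ℝ := fun j k => ∫ y in Ω, ω y * φ j y * φ k y with hGdef
  set m : Fin K → ℝ := fun k => ∫ y in Ω, φ k y * ω y with hmdef
  have hG : Filter.Tendsto (discreteGram φ x r) Filter.atTop (nhds G) :=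
    tendsto_pi_nhds.mpr fun j => tendsto_pi_nhds.mpr fun k => hconv _ (hφF j) _ (hφF k)
  have hdet : G.det ≠ 0 := by
    refine gram_limit_det_ne_zero φ x r hr G hG fun c hc => ?_
    have hmem : (∑ k, c k • φ k) ∈ Submodule.span ℝ (Set.range φ) :=
      Submodule.sum_mem _ fun k _ => Submodule.smul_mem _ _ (hφF k)
    have hz := huni N₁ le_rfl _ hmem fun n _ => by simpa [Finset.sum_apply] using hc n
    refine funext (Fintype.linearIndependent_iff.mp hli c ?_)
    funext y
    have h : ∑ k, c k * φ k y = 0 := by simpa [Finset.sum_apply] using hz y y.2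
    rw [Finset.sum_apply]
    exact h
  -- The moments are `G e`: both are limits of `∑ r_n φ_j(x_n) · 1`.
  have hm : G.mulVec e = m := by
    funext j
    have hc : Continuous fun A : Matrix (Fin K) (Fin K) ℝ => A.mulVec e j := by
      simp only [Matrix.mulVec, dotProduct]
      fun_prop
    have h1 := (hc.tendsto G).comp hG
    have h2 := hconv _ (hφF j) _ h1F
    refine tendsto_nhds_unique h1 ?_
    simp only [Function.comp_def, discreteGram_mulVec, he1]
    simpa [hmdef, mul_comm] using h2
  have hclim := tendsto_inv_mulVec _ G hG hdet m e hm
  choose M hM using hφb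
  have herr : Filter.Tendsto
      (fun N => ∑ k, |((discreteGram φ x r N)⁻¹.mulVec m) k - e k| * M k)
      Filter.atTop (nhds 0) := by
    have : Filter.Tendsto
        (fun N => ∑ k, |((discreteGram φ x r N)⁻¹.mulVec m) k - e k| * M k)
        Filter.atTop (nhds (∑ k, |e k - e k| * M k)) :=
      tendsto_finsetSum _ fun k _ =>
        (((tendsto_pi_nhds.mp hclim k).sub_const (e k)).abs).mul_const (M k)
    simpa using this
  have hdetN : ∀ᶠ N in Filter.atTop, (discreteGram φ x r N).det ≠ 0 :=
    (((Continuous.matrix_det continuous_id).tendsto G).comp hG).eventually_ne hdet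
  obtain ⟨N₀, hN₀⟩ := Filter.eventually_atTop.mp
    ((hdetN.and (herr.eventually_lt_const one_pos)).and (Filter.eventually_ge_atTop N₁))
  refine ⟨N₀, fun N hN n hn => ?_⟩
  obtain ⟨⟨hd, hlt⟩, hN1⟩ := hN₀ N hN
  set c := (discreteGram φ x r N)⁻¹.mulVec m with hcdef
  have hc : (discreteGram φ x r N).mulVec c = m := by
    rw [hcdef, Matrix.mulVec_mulVec, Matrix.mul_nonsing_inv _ (isUnit_iff_ne_zero.mpr hd),
      Matrix.one_mulVec]
  rw [minimizer_eq φ x r hr N c m (wLS N) hc (hwLS N hN1).1 (hwLS N hN1).2 n hn]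
  refine mul_pos (hr n) ?_
  have hsplit : ∑ k, c k * φ k (x n) = 1 + ∑ k, (c k - e k) * φ k (x n) := by
    rw [← he1 (x n), ← Finset.sum_add_distrib]
    exact Finset.sum_congr rfl fun k _ => by ring
  have hbound : |∑ k, (c k - e k) * φ k (x n)| ≤ ∑ k, |c k - e k| * M k := by
    refine (Finset.abs_sum_le_sum_abs _ _).trans (Finset.sum_le_sum fun k _ => ?_)
    rw [abs_mul]
    exact mul_le_mul_of_nonneg_left (hM k _ (hx n)) (abs_nonneg _)
  rw [hsplit]
  linarith [(abs_le.mp hbound).1]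
end

section
/- Let F be a K-dimensional vector space of real-valued functions on Ω containing the constant function 1, let [u,v]_N = Σ_{n=1}^N r_n u(x_n) v(x_n) (with r_n > 0) be an inner product on F, let ⟨u,v⟩ = ∫_Ω u v ω be a second inner product on F, and let {π_k}_{k=1}^K be a basis of F orthonormal with respect to [·,·]_N whose first element is the normalized constant π_1 ≡ 1/‖1‖_N. Set ε_k = [π_k, 1]_N − ⟨π_k, 1⟩ for k = 1,…,K. Then the least squares weights w_n^{LS} = r_n Σ_{k=1}^K π_k(x_n) ⟨π_k, 1⟩ satisfy w_n^{LS} = r_n ( 1 − Σ_{k=1}^K ε_k π_k(x_n) ) for every n = 1,…,N; consequently w_n^{LS} > 0 if and only if Σ_{k=1}^K ε_k π_k(x_n) < 1. -/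
/-!
The constant `1` lies in the span of the `[·,·]_N`-orthonormal family `π`, so it equals its own
discrete Fourier expansion: `1 = ∑ k, [π_k, 1]_N π_k`. Evaluating at `x n` and subtracting
`∑ k, ε k * π k (x n)` leaves `∑ k, ⟨π_k, 1⟩ π_k (x n)`, which is `wLS n / r n`; the sign
criterion then follows from `0 < r n`.
-/

open MeasureTheory

/-- **positivity identity for the least squares weights.** Let `{π_k}`
be a basis of `F` (with `1 ∈ F`) orthonormal with respect to the discrete inner
product `[u,v]_N = ∑_n r_n u(x_n) v(x_n)`, whose first element is the normalized
constant `π_1 ≡ 1/‖1‖_N = 1/√(∑ r_n)`. With `ε_k = [π_k, 1]_N − ⟨π_k, 1⟩` (where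
`⟨u,v⟩ = ∫_Ω u v ω`), the least squares weights
`w_n^{LS} = r_n ∑_k π_k(x_n) ⟨π_k, 1⟩` satisfy
`w_n^{LS} = r_n (1 − ∑_k ε_k π_k(x_n))`; consequently `w_n^{LS} > 0` iff
`∑_k ε_k π_k(x_n) < 1`. -/
theorem stmt_9 (d K N : ℕ) (hK : 0 < K) (Ω : Set (Fin d → ℝ))
    (π : Fin K → (Fin d → ℝ) → ℝ)
    (x : Fin N → Fin d → ℝ) (hx : ∀ n, x n ∈ Ω)
    (r : Fin N → ℝ) (hr : ∀ n, 0 < r n)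
    (horth : ∀ k l : Fin K,
      ∑ n, r n * π k (x n) * π l (x n) = if k = l then 1 else 0)
    (hπ1 : π ⟨0, hK⟩ = fun _ => (Real.sqrt (∑ n, r n))⁻¹)
    (ω : (Fin d → ℝ) → ℝ) (hω : ∀ y ∈ Ω, 0 ≤ ω y)
    (h1F : (fun _ => (1 : ℝ)) ∈ Submodule.span ℝ (Set.range π))
    (ε : Fin K → ℝ)
    (hε : ∀ k, ε k = (∑ n, r n * π k (x n)) - ∫ y in Ω, π k y * ω y)
    (wLS : Fin N → ℝ)
    (hwLS : ∀ n, wLS n = r n * ∑ k, π k (x n) * ∫ y in Ω, π k y * ω y) :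
    ∀ n, wLS n = r n * (1 - ∑ k, ε k * π k (x n)) ∧
      (0 < wLS n ↔ ∑ k, ε k * π k (x n) < 1) := by
  obtain ⟨c, hc⟩ := (Submodule.mem_span_range_iff_exists_fun ℝ).1 h1F
  have hc' : ∀ y, ∑ l, c l * π l y = 1 := fun y => by
    simpa using congrFun hc y
  have hcoef : ∀ k, ∑ n, r n * π k (x n) = c k := fun k =>
    calc ∑ n, r n * π k (x n)
        = ∑ n, ∑ l, c l * (r n * π k (x n) * π l (x n)) := by
          refine Finset.sum_congr rfl fun n _ => ?_
          calc r n * π k (x n) = r n * π k (x n) * ∑ l, c l * π l (x n) := by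
                rw [hc', mul_one]
            _ = ∑ l, c l * (r n * π k (x n) * π l (x n)) := by
                rw [Finset.mul_sum]
                exact Finset.sum_congr rfl fun l _ => by ring
      _ = ∑ l, c l * ∑ n, r n * π k (x n) * π l (x n) := by
          rw [Finset.sum_comm]
          simp only [Finset.mul_sum]
      _ = c k := by simp [horth]
  intro n
  have hw : wLS n = r n * (1 - ∑ k, ε k * π k (x n)) := by
    rw [hwLS, ← hc' (x n), ← Finset.sum_sub_distrib]
    congr 1
    refine Finset.sum_congr rfl fun k _ => ?_
    rw [hε, hcoef]
    ring
  refine ⟨hw, ?_⟩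
  rw [hw, mul_pos_iff_of_pos_left (hr n), sub_pos]
end
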